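/- For every α ∈ ℂ with α ≠ 1, the algebra 𝔑₉(α) degenerates to 𝔑₂^ℂ(−α/(1−α)²): the structure λ with table e₁e₁ = e₃, e₁e₂ = e₃, e₂e₂ = (−α/(1−α)²)e₃ lies in the closure of the GL(V)-orbit of the structure μ_α with table e₁e₂ = e₄, e₂e₁ = αe₄, e₂e₂ = e₃. -/

import Mathlib

noncomputable section

/-- `V = ℂ⁴`. -/
abbrev V : Type := Fin 4 → ℂ

/-- The standard basis vectors `e₁, e₂, e₃, e₄` of `V` (indexed by `0, 1, 2, 3`). -/
def e (i : Fin 4) : V := Pi.single i 1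

/-- The `GL(V)`-orbit `O(μ)` of an algebra structure `μ` on `V`, for the action
`(g • μ)(x, y) = g (μ (g⁻¹ x) (g⁻¹ y))`. -/
def orbit (μ : V →L[ℂ] V →L[ℂ] V) : Set (V →L[ℂ] V →L[ℂ] V) :=
  {ν | ∃ g : V ≃L[ℂ] V, ∀ x y : V, ν x y = g (μ (g.symm x) (g.symm y))}

theorem tend_aux {E : Type*} [NormedAddCommGroup E] [NormedSpace ℂ E] (a b : E) :
    Filter.Tendsto (fun t : ℂ => a + t • b) (nhdsWithin 0 {0}ᶜ) (nhds a) := by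
  have hc : Continuous (fun t : ℂ => a + t • b) := by fun_prop
  have h0 := hc.tendsto 0
  simp only [zero_smul, add_zero] at h0
  exact h0.mono_left nhdsWithin_le_nhds

theorem e_expand (x : V) : x = x 0 • e 0 + x 1 • e 1 + x 2 • e 2 + x 3 • e 3 := by
  ext i; fin_cases i <;> simp [e]

theorem bil_expand (B : V →L[ℂ] V →L[ℂ] V) (x y : V) :
    B x y = ∑ i : Fin 4, ∑ j : Fin 4, (x i * y j) • B (e i) (e j) := by
  conv_lhs => rw [e_expand x, e_expand y]
  simp only [map_add, map_smul, add_apply, smul_apply,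
    Fin.sum_univ_four, smul_add, smul_smul]
  simp only [mul_comm]
  abel

/-- fixed change of basis on the first two coordinates -/
def hmap (d : ℂ) : V →L[ℂ] V := LinearMap.toContinuousLinearMap
  { toFun := fun y => ![-d * y 1, y 0 + d * y 1, 0, 0]
    map_add' := by intro x y; ext i; fin_cases i <;> simp <;> ring
    map_smul' := by intro c y; ext i; fin_cases i <;> simp <;> ring }

/-- projection to the last coordinate -/
def fmap : V →L[ℂ] V := LinearMap.toContinuousLinearMap
  { toFun := fun y => ![0, 0, 0, y 3]
    map_add' := by intro x y; ext i; fin_cases i <;> simp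
    map_smul' := by intro c y; ext i; fin_cases i <;> simp }

/-- the degenerating family of base changes -/
def gmap (d c t : ℂ) (hd : d * c = 1) (ht : t ≠ 0) : V ≃L[ℂ] V := LinearEquiv.toContinuousLinearEquiv
  { toFun := fun x => ![x 0 + x 1, -c * x 0, x 2 + x 3, t * x 3]
    invFun := fun y => ![-d * y 1, y 0 + d * y 1, y 2 - t⁻¹ * y 3, t⁻¹ * y 3]
    map_add' := by intro x y; ext i; fin_cases i <;> simp <;> ring
    map_smul' := by intro c y; ext i; fin_cases i <;> simp <;> ring
    left_inv := by
      intro x; ext i; fin_cases i <;> simp [ht]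
      · linear_combination x 0 * hd
      · linear_combination (-x 0) * hd
    right_inv := by
      intro x; ext i; fin_cases i <;> simp [ht]
      linear_combination x 1 * hd }

/-- For every α ≠ 1, 𝔑₉(α) degenerates to 𝔑₂^ℂ(−α/(1−α)²). -/
theorem stmt14 (α : ℂ) (hα : α ≠ 1) (μ lam : V →L[ℂ] V →L[ℂ] V)
    (hμ : ∀ i j : Fin 4, μ (e i) (e j) =
    (![
      ![0, e 3, 0, 0],
      ![α • e 3, e 2, 0, 0],
      ![0, 0, 0, 0],
      ![0, 0, 0, 0]
     ] : Fin 4 → Fin 4 → V) i j)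
    (hlam : ∀ i j : Fin 4, lam (e i) (e j) =
    (![
      ![e 2, e 2, 0, 0],
      ![0, (-α / (1 - α) ^ 2) • e 2, 0, 0],
      ![0, 0, 0, 0],
      ![0, 0, 0, 0]
     ] : Fin 4 → Fin 4 → V) i j) :
    lam ∈ closure (orbit μ) := by
  have h1 : (1 - α) ≠ 0 := sub_ne_zero.mpr (Ne.symm hα)
  have hd : (1 - α)⁻¹ * (1 - α) = 1 := inv_mul_cancel₀ h1
  have hμ' : ∀ x y, μ x y = ![0, 0, x 1 * y 1, x 0 * y 1 + α * (x 1 * y 0)] := by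
    intro x y
    rw [bil_expand]
    simp only [hμ, Fin.sum_univ_four]
    ext i; fin_cases i <;> simp [e] <;> ring
  have hl' : ∀ x y, lam x y = ![0, 0, x 0 * y 0 + x 0 * y 1
      + (-α / (1 - α) ^ 2) * (x 1 * y 1), 0] := by
    intro x y
    rw [bil_expand]
    simp only [hlam, Fin.sum_univ_four]
    ext i; fin_cases i <;> simp [e] <;> ring
  let κ : V →L[ℂ] V →L[ℂ] V := ((ContinuousLinearMap.compL ℂ V V V) fmap).comp
    (ContinuousLinearMap.bilinearComp μ (hmap (1 - α)⁻¹) (hmap (1 - α)⁻¹))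
  have hκ : ∀ x y, κ x y = fmap (μ (hmap (1 - α)⁻¹ x) (hmap (1 - α)⁻¹ y)) := fun x y => rfl
  have hT : Filter.Tendsto (fun t : ℂ => lam + t • κ) (nhdsWithin 0 {0}ᶜ) (nhds lam) := by
    exact tend_aux lam κ
  refine mem_closure_of_tendsto hT ?_
  filter_upwards [self_mem_nhdsWithin] with t ht
  have ht : t ≠ 0 := ht
  refine ⟨gmap (1 - α)⁻¹ (1 - α) t hd ht, fun x y => ?_⟩
  have hs : ∀ y, (gmap (1 - α)⁻¹ (1 - α) t hd ht).symm y = ![-(1 - α)⁻¹ * y 1,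
    y 0 + (1 - α)⁻¹ * y 1, y 2 - t⁻¹ * y 3, t⁻¹ * y 3] := fun y => rfl
  have hg : ∀ x, gmap (1 - α)⁻¹ (1 - α) t hd ht x =
    ![x 0 + x 1, -(1 - α) * x 0, x 2 + x 3, t * x 3] := fun y => rfl
  have hh : ∀ y, hmap (1 - α)⁻¹ y = ![-(1 - α)⁻¹ * y 1, y 0 + (1 - α)⁻¹ * y 1, 0, 0] :=
    fun y => rfl
  have hf : ∀ y, fmap y = ![0, 0, 0, y 3] := fun y => rfl
  simp only [add_apply, smul_apply, hκ, hl', hg, hs, hμ',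
    hh, hf]
  ext i; fin_cases i <;> simp
  field_simp
  ring
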